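/- Assume θ ≥ 0, b ≥ 0 and c ≤ 0 on Ω. Let g be a fixed boundary datum, and for each integer n ≥ 1 let Ψ_n ∈ C²(Ω) ∩ C¹(cl(Ω)) with Ψ_n > 0 on cl(Ω) satisfy the regularized equation -∇·(a∇Ψ_n) + bΨ_n = -c(Ψ_n + 1/n)^{-θ} pointwise in Ω with Ψ_n = g on ∂Ω. Then for all integers n > m ≥ 1 one has Ψ_n ≥ Ψ_m and Ψ_n + 1/n ≤ Ψ_m + 1/m everywhere in Ω. -/

import Mathlib

/-!
Both inequalities are instances of one comparison principle. Where `Ψ m > Ψ n`, or where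
`Ψ n + 1 / n > Ψ m + 1 / m`, the monotonicity of `t ↦ t ^ (-θ)` and the sign conditions on `b`, `c`
make `∇·(a∇·)` of the corresponding difference nonnegative, so that the weak maximum principle
carries the bound on the difference from the boundary into `Ω`.

Under a strict differential inequality the maximum principle follows by evaluating
`∇·(a∇w) = a Δw + ∇a·∇w` at an interior maximum. Adding `ε` times the barrier
`x ↦ exp ⟪v, x⟫`, with `v` so long that the second-order term `a ‖v‖²` beats the drift `⟪v, ∇a⟫`,
and letting `ε → 0` removes the strictness.
-/

open Real Set MeasureTheory Filter Topology

/-- Divergence-form operator `∇·(a∇u)(x) = ∑ i ∂_i (a ∂_i u)(x)`. -/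
noncomputable def divA {d : ℕ} (a u : EuclideanSpace ℝ (Fin d) → ℝ)
    (x : EuclideanSpace ℝ (Fin d)) : ℝ :=
  ∑ i : Fin d,
    fderiv ℝ (fun y => a y * fderiv ℝ u y (EuclideanSpace.single i (1 : ℝ))) x
      (EuclideanSpace.single i (1 : ℝ))

/-- Squared Euclidean norm of the gradient `|∇u|²(x)`. -/
noncomputable def gradSq {d : ℕ} (u : EuclideanSpace ℝ (Fin d) → ℝ)
    (x : EuclideanSpace ℝ (Fin d)) : ℝ :=
  ∑ i : Fin d, (fderiv ℝ u x (EuclideanSpace.single i (1 : ℝ))) ^ 2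

open scoped Gradient InnerProductSpace Laplacian

section SecondDerivativeTest

lemma deriv_deriv_nonpos_of_isLocalMax {φ : ℝ → ℝ} {t : ℝ} (hφ : ContinuousAt φ t)
    (hmax : IsLocalMax φ t) : deriv (deriv φ) t ≤ 0 := by
  by_contra! hpos
  have hmin : IsLocalMin φ t := isLocalMin_of_deriv_deriv_pos hpos hmax.deriv_eq_zero hφ
  have hconst : φ =ᶠ[𝓝 t] fun _ => φ t := by
    filter_upwards [hmax, hmin] with s hle hge using le_antisymm hle hge
  have hzero : deriv (deriv φ) t = 0 := by simp [hconst.deriv.deriv_eq]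
  exact hpos.ne' hzero

lemma fderiv_fderiv_apply_self_nonpos_of_isLocalMax {E : Type*} [NormedAddCommGroup E]
    [NormedSpace ℝ E] {f : E → ℝ} {x : E} (hf : ContDiffAt ℝ 2 f x) (hmax : IsLocalMax f x)
    (v : E) : fderiv ℝ (fderiv ℝ f) x v v ≤ 0 := by
  have hline (t : ℝ) : HasDerivAt (fun t : ℝ => x + t • v) v t := by
    simpa using ((hasDerivAt_id t).smul_const v).const_add x
  have hx : x + (0 : ℝ) • v = x := by simp
  have htendsto : Tendsto (fun t : ℝ => x + t • v) (𝓝 0) (𝓝 x) := by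
    simpa using (hline 0).continuousAt.tendsto
  have hderiv : deriv (fun t : ℝ => f (x + t • v)) =ᶠ[𝓝 0] fun t => fderiv ℝ f (x + t • v) v := by
    filter_upwards [htendsto.eventually (hf.eventually (by simp))] with t ht
    exact ((ht.differentiableAt two_ne_zero).hasFDerivAt.comp_hasDerivAt t (hline t)).deriv
  have hfderiv : DifferentiableAt ℝ (fderiv ℝ f) x :=
    (hf.fderiv_right (m := 1) (by norm_num)).differentiableAt one_ne_zero
  have hderiv2 : HasDerivAt (fun t : ℝ => fderiv ℝ f (x + t • v) v)
      (fderiv ℝ (fderiv ℝ f) x v v) 0 :=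
    (ContinuousLinearMap.apply ℝ ℝ v).hasFDerivAt.comp_hasDerivAt 0
      (hfderiv.hasFDerivAt.comp_hasDerivAt_of_eq 0 (hline 0) hx.symm)
  rw [← hderiv2.deriv, ← hderiv.deriv_eq]
  refine deriv_deriv_nonpos_of_isLocalMax ?_ ?_
  · exact ContinuousAt.comp_of_eq hf.continuousAt (hline 0).continuousAt hx
  · simpa [IsLocalMax, IsMaxFilter] using htendsto.eventually hmax

end SecondDerivativeTest

section Laplacian

variable {E : Type*} [NormedAddCommGroup E] [InnerProductSpace ℝ E]

lemma hasFDerivAt_exp_inner (v x : E) :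
    HasFDerivAt (fun y => exp ⟪v, y⟫_ℝ) (exp ⟪v, x⟫_ℝ • innerSL ℝ v) x :=
  (innerSL ℝ v).hasFDerivAt.exp

lemma contDiff_exp_inner (v : E) {n : WithTop ℕ∞} : ContDiff ℝ n fun y => exp ⟪v, y⟫_ℝ :=
  (innerSL ℝ v).contDiff.exp

variable [FiniteDimensional ℝ E]

lemma laplacian_eq_sum_fderiv_fderiv {F ι : Type*} [NormedAddCommGroup F] [NormedSpace ℝ F]
    [Fintype ι] (e : OrthonormalBasis ι ℝ E) (f : E → F) (x : E) :
    Δ f x = ∑ i, fderiv ℝ (fderiv ℝ f) x (e i) (e i) := by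
  simp [InnerProductSpace.laplacian_eq_iteratedFDeriv_orthonormalBasis f e,
    iteratedFDeriv_two_apply]

lemma laplacian_nonpos_of_isLocalMax {f : E → ℝ} {x : E} (hf : ContDiffAt ℝ 2 f x)
    (hmax : IsLocalMax f x) : Δ f x ≤ 0 := by
  rw [laplacian_eq_sum_fderiv_fderiv (stdOrthonormalBasis ℝ E)]
  exact Finset.sum_nonpos fun _ _ => fderiv_fderiv_apply_self_nonpos_of_isLocalMax hf hmax _

lemma laplacian_exp_inner (v x : E) :
    Δ (fun y => exp ⟪v, y⟫_ℝ) x = exp ⟪v, x⟫_ℝ * ‖v‖ ^ 2 := by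
  have hfderiv : fderiv ℝ (fun y => exp ⟪v, y⟫_ℝ) = fun y => exp ⟪v, y⟫_ℝ • innerSL ℝ v :=
    funext fun y => (hasFDerivAt_exp_inner v y).fderiv
  let e := stdOrthonormalBasis ℝ E
  rw [laplacian_eq_sum_fderiv_fderiv e, hfderiv,
    ((hasFDerivAt_exp_inner v x).smul_const (innerSL ℝ v)).fderiv,
    ← e.sum_sq_norm_inner_left v, Finset.mul_sum]
  refine Finset.sum_congr rfl fun i _ => ?_
  simp only [e, ContinuousLinearMap.smulRight_apply, smul_apply, coe_innerSL_apply, smul_eq_mul,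
    norm_eq_abs, sq_abs]
  ring

end Laplacian

section DivergenceForm

variable {d : ℕ} {a u w : EuclideanSpace ℝ (Fin d) → ℝ} {x : EuclideanSpace ℝ (Fin d)}

lemma divA_eq_laplacian (ha : DifferentiableAt ℝ a x) (hu : ContDiffAt ℝ 2 u x) :
    divA a u x = a x * Δ u x + fderiv ℝ u x (∇ a x) := by
  let e := EuclideanSpace.basisFun (Fin d) ℝ
  have hdu : DifferentiableAt ℝ (fderiv ℝ u) x :=
    (hu.fderiv_right (m := 1) (by norm_num)).differentiableAt one_ne_zero
  have hpartial (i : Fin d) :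
      fderiv ℝ (fun y => a y * fderiv ℝ u y (e i)) x (e i) =
        a x * fderiv ℝ (fderiv ℝ u) x (e i) (e i) + fderiv ℝ u x (e i) * fderiv ℝ a x (e i) := by
    have hflux : HasFDerivAt (fun y => a y * fderiv ℝ u y (e i)) _ x :=
      ha.hasFDerivAt.mul
        ((ContinuousLinearMap.apply ℝ ℝ (e i)).hasFDerivAt.comp x hdu.hasFDerivAt)
    simp [hflux.fderiv]
  have hdrift : ∑ i, fderiv ℝ u x (e i) * fderiv ℝ a x (e i) = fderiv ℝ u x (∇ a x) := by
    rw [← inner_gradient_left, ← e.sum_inner_mul_inner]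
    simp [inner_gradient_left, inner_gradient_right]
  calc divA a u x = ∑ i, fderiv ℝ (fun y => a y * fderiv ℝ u y (e i)) x (e i) := by
        simp [divA, e]
    _ = a x * Δ u x + fderiv ℝ u x (∇ a x) := by
        rw [Finset.sum_congr rfl fun i _ => hpartial i, Finset.sum_add_distrib, ← Finset.mul_sum,
          ← laplacian_eq_sum_fderiv_fderiv, hdrift]

lemma divA_add (ha : DifferentiableAt ℝ a x) (hu : ContDiffAt ℝ 2 u x)
    (hw : ContDiffAt ℝ 2 w x) : divA a (u + w) x = divA a u x + divA a w x := by
  have huw : ContDiffAt ℝ 2 (u + w) x := hu.add hw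
  rw [divA_eq_laplacian ha huw, divA_eq_laplacian ha hu, divA_eq_laplacian ha hw,
    hu.laplacian_add hw, fderiv_add (hu.differentiableAt two_ne_zero)
      (hw.differentiableAt two_ne_zero), add_apply]
  ring

lemma divA_const_smul (ha : DifferentiableAt ℝ a x) (hu : ContDiffAt ℝ 2 u x) (s : ℝ) :
    divA a (s • u) x = s * divA a u x := by
  have hsu : ContDiffAt ℝ 2 (s • u) x := hu.const_smul s
  rw [divA_eq_laplacian ha hsu, divA_eq_laplacian ha hu,
    InnerProductSpace.laplacian_smul s hu, fderiv_const_smul (hu.differentiableAt two_ne_zero)]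
  simp only [smul_eq_mul, smul_apply]
  ring

lemma divA_sub (ha : DifferentiableAt ℝ a x) (hu : ContDiffAt ℝ 2 u x)
    (hw : ContDiffAt ℝ 2 w x) : divA a (u - w) x = divA a u x - divA a w x := by
  have hneg : ContDiffAt ℝ 2 ((-1 : ℝ) • w) x := hw.const_smul (-1 : ℝ)
  rw [show u - w = u + (-1 : ℝ) • w by module, divA_add ha hu hneg, divA_const_smul ha hw]
  ring

lemma divA_nonpos_of_isLocalMax (ha : DifferentiableAt ℝ a x) (ha_nonneg : 0 ≤ a x)
    (hu : ContDiffAt ℝ 2 u x) (hmax : IsLocalMax u x) : divA a u x ≤ 0 := by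
  rw [divA_eq_laplacian ha hu, hmax.fderiv_eq_zero]
  simpa using mul_nonpos_of_nonneg_of_nonpos ha_nonneg (laplacian_nonpos_of_isLocalMax hu hmax)

lemma divA_exp_inner (ha : DifferentiableAt ℝ a x) (v : EuclideanSpace ℝ (Fin d)) :
    divA a (fun y => exp ⟪v, y⟫_ℝ) x = exp ⟪v, x⟫_ℝ * (a x * ‖v‖ ^ 2 + ⟪v, ∇ a x⟫_ℝ) := by
  rw [divA_eq_laplacian ha (contDiff_exp_inner v).contDiffAt, laplacian_exp_inner,
    (hasFDerivAt_exp_inner v x).fderiv]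
  simp only [smul_apply, coe_innerSL_apply, inner_gradient_right, ringHom_apply, smul_eq_mul]
  ring

end DivergenceForm

section MaximumPrinciple

variable {d : ℕ} {Ω : Set (EuclideanSpace ℝ (Fin d))} {a w : EuclideanSpace ℝ (Fin d) → ℝ}

lemma exists_divA_exp_inner_pos (hd : 1 ≤ d) (hΩo : IsOpen Ω) (ha : DifferentiableOn ℝ a Ω)
    {a₀ B : ℝ} (ha₀ : 0 < a₀) (ha_ge : ∀ x ∈ Ω, a₀ ≤ a x) (hB : ∀ x ∈ Ω, ‖∇ a x‖ ≤ B) :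
    ∃ v : EuclideanSpace ℝ (Fin d), ∀ x ∈ Ω, 0 < divA a (fun y => exp ⟪v, y⟫_ℝ) x := by
  have : NeZero d := ⟨by omega⟩
  obtain ⟨v, hv⟩ := exists_norm_eq (EuclideanSpace ℝ (Fin d)) (c := (|B| + 1) / a₀) (by positivity)
  have hv_pos : 0 < ‖v‖ := by rw [hv]; positivity
  refine ⟨v, fun x hx => ?_⟩
  rw [divA_exp_inner (ha.differentiableAt (hΩo.mem_nhds hx))]
  have hdiffusion : (|B| + 1) * ‖v‖ ≤ a x * ‖v‖ ^ 2 := calc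
    (|B| + 1) * ‖v‖ = a₀ * ‖v‖ ^ 2 := by rw [hv]; field_simp
    _ ≤ a x * ‖v‖ ^ 2 := by gcongr; exact ha_ge x hx
  have hdrift : -(|B| * ‖v‖) ≤ ⟪v, ∇ a x⟫_ℝ := by
    have hnorm : ‖∇ a x‖ ≤ |B| := (hB x hx).trans (le_abs_self B)
    calc -(|B| * ‖v‖) ≤ -(‖v‖ * ‖∇ a x‖) := by rw [mul_comm]; gcongr
      _ ≤ ⟪v, ∇ a x⟫_ℝ := neg_le_of_abs_le (abs_real_inner_le_norm v (∇ a x))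
  exact mul_pos (exp_pos _) (by linarith)

lemma le_of_frontier_le_of_divA_pos (hΩo : IsOpen Ω) (hΩb : Bornology.IsBounded Ω)
    (ha : DifferentiableOn ℝ a Ω) (ha_nonneg : ∀ x ∈ Ω, 0 ≤ a x)
    (hw2 : ContDiffOn ℝ 2 w Ω) (hwc : ContinuousOn w (closure Ω)) {K : ℝ}
    (hbd : ∀ x ∈ frontier Ω, w x ≤ K) (hdiv : ∀ x ∈ Ω, K < w x → 0 < divA a w x) :
    ∀ x ∈ Ω, w x ≤ K := by
  intro x hx
  by_contra! hKx
  obtain ⟨y, hy, hmax⟩ :=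
    hΩb.isCompact_closure.exists_isMaxOn ⟨x, subset_closure hx⟩ hwc
  have hKy : K < w y := hKx.trans_le (hmax (subset_closure hx))
  have hyΩ : y ∈ Ω := by
    by_contra hyΩ
    exact hKy.not_ge (hbd y (hΩo.frontier_eq ▸ ⟨hy, hyΩ⟩))
  have hΩy : Ω ∈ 𝓝 y := hΩo.mem_nhds hyΩ
  have hlocal : IsLocalMax w y := hmax.isLocalMax (mem_of_superset hΩy subset_closure)
  exact (hdiv y hyΩ hKy).not_ge
    (divA_nonpos_of_isLocalMax (ha.differentiableAt hΩy) (ha_nonneg y hyΩ) (hw2.contDiffAt hΩy)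
      hlocal)

lemma le_of_frontier_le_of_divA_nonneg (hd : 1 ≤ d) (hΩo : IsOpen Ω) (hΩb : Bornology.IsBounded Ω)
    (ha : DifferentiableOn ℝ a Ω) {a₀ B : ℝ} (ha₀ : 0 < a₀)
    (ha_ge : ∀ x ∈ Ω, a₀ ≤ a x) (hB : ∀ x ∈ Ω, ‖∇ a x‖ ≤ B)
    (hw2 : ContDiffOn ℝ 2 w Ω) (hwc : ContinuousOn w (closure Ω)) {K : ℝ}
    (hbd : ∀ x ∈ frontier Ω, w x ≤ K) (hdiv : ∀ x ∈ Ω, K < w x → 0 ≤ divA a w x) :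
    ∀ x ∈ Ω, w x ≤ K := by
  intro x hx
  obtain ⟨v, hv⟩ := exists_divA_exp_inner_pos hd hΩo ha ha₀ ha_ge hB
  set h : EuclideanSpace ℝ (Fin d) → ℝ := fun y => exp ⟪v, y⟫_ℝ
  have hh : ContDiff ℝ 2 h := contDiff_exp_inner v
  have hh_pos (y : EuclideanSpace ℝ (Fin d)) : 0 < h y := exp_pos _
  obtain ⟨H, hH⟩ := hΩb.isCompact_closure.exists_bound_of_continuousOn hh.continuous.continuousOn
  have hhH (y) (hy : y ∈ closure Ω) : h y ≤ H := (le_abs_self _).trans (hH y hy)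
  have hH_pos : 0 < H := (hh_pos x).trans_le (hhH x (subset_closure hx))
  have hperturbed (ε : ℝ) (hε : 0 < ε) : ∀ y ∈ Ω, (w + ε • h) y ≤ K + ε * H := by
    have hεh (y) (hy : y ∈ closure Ω) : ε * h y ≤ ε * H :=
      mul_le_mul_of_nonneg_left (hhH y hy) hε.le
    have hεh_smooth : ContDiff ℝ 2 (ε • h) := hh.const_smul ε
    refine le_of_frontier_le_of_divA_pos (w := w + ε • h) hΩo hΩb ha
      (fun y hy => ha₀.le.trans (ha_ge y hy)) (hw2.add hεh_smooth.contDiffOn)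
      (hwc.add hεh_smooth.continuous.continuousOn) (fun y hy => ?_) fun y hy hlt => ?_
    · exact add_le_add (hbd y hy) (hεh y (frontier_subset_closure hy))
    · have hKy : K < w y := by
        have hsum : K + ε * H < w y + ε * h y := hlt
        linarith [hεh y (subset_closure hy)]
      have hΩy : Ω ∈ 𝓝 y := hΩo.mem_nhds hy
      have ha_y : DifferentiableAt ℝ a y := ha.differentiableAt hΩy
      rw [divA_add ha_y (hw2.contDiffAt hΩy) hεh_smooth.contDiffAt,
        divA_const_smul ha_y hh.contDiffAt]
      exact add_pos_of_nonneg_of_pos (hdiv y hy hKy) (mul_pos hε (hv y hy))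
  refine le_of_forall_pos_le_add fun δ hδ => ?_
  calc w x ≤ w x + δ / H * h x := le_add_of_nonneg_right (by have := hh_pos x; positivity)
    _ ≤ K + δ / H * H := hperturbed (δ / H) (div_pos hδ hH_pos) x hx
    _ = K + δ := by rw [div_mul_cancel₀ δ hH_pos.ne']

end MaximumPrinciple

section Comparison

variable {d : ℕ} {Ω : Set (EuclideanSpace ℝ (Fin d))} {a b u v : EuclideanSpace ℝ (Fin d) → ℝ}
  {f : EuclideanSpace ℝ (Fin d) → ℝ → ℝ}

lemma subsolution_le_supersolution_add (hd : 1 ≤ d) (hΩo : IsOpen Ω)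
    (hΩb : Bornology.IsBounded Ω) (ha : DifferentiableOn ℝ a Ω) {a₀ B : ℝ}
    (ha₀ : 0 < a₀) (ha_ge : ∀ x ∈ Ω, a₀ ≤ a x) (hB : ∀ x ∈ Ω, ‖∇ a x‖ ≤ B)
    (hb : ∀ x ∈ Ω, 0 ≤ b x) (hf : ∀ x ∈ Ω, AntitoneOn (f x) (Ioi 0)) {ε δ K : ℝ}
    (hu2 : ContDiffOn ℝ 2 u Ω) (huc : ContinuousOn u (closure Ω))
    (hu : ∀ x ∈ Ω, -divA a u x + b x * u x ≤ f x (u x + ε))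
    (hv2 : ContDiffOn ℝ 2 v Ω) (hvc : ContinuousOn v (closure Ω))
    (hv_pos : ∀ x ∈ Ω, 0 < v x + δ)
    (hv : ∀ x ∈ Ω, f x (v x + δ) ≤ -divA a v x + b x * v x)
    (hK : 0 ≤ K) (hδK : δ ≤ ε + K) (hbd : ∀ x ∈ frontier Ω, u x ≤ v x + K) :
    ∀ x ∈ Ω, u x ≤ v x + K := by
  suffices h : ∀ x ∈ Ω, (u - v) x ≤ K from fun x hx => sub_le_iff_le_add'.1 (h x hx)
  refine le_of_frontier_le_of_divA_nonneg (w := u - v) hd hΩo hΩb ha ha₀ ha_ge hB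
    (hu2.sub hv2) (huc.sub hvc) (fun x hx => sub_le_iff_le_add'.2 (hbd x hx)) fun x hx hlt => ?_
  have huv : K + v x < u x := lt_sub_iff_add_lt.1 hlt
  have hshift : v x + δ ≤ u x + ε := by linarith
  have hreaction : f x (u x + ε) ≤ f x (v x + δ) :=
    hf x hx (hv_pos x hx) ((hv_pos x hx).trans_le hshift) hshift
  have hpotential : b x * v x ≤ b x * u x :=
    mul_le_mul_of_nonneg_left (by linarith) (hb x hx)
  have hΩx : Ω ∈ 𝓝 x := hΩo.mem_nhds hx
  rw [divA_sub (ha.differentiableAt hΩx) (hu2.contDiffAt hΩx) (hv2.contDiffAt hΩx)]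
  linarith [hu x hx, hv x hx]

theorem stmt8_general (hd : 1 ≤ d) (hΩo : IsOpen Ω)
    (hΩb : Bornology.IsBounded Ω) (ha : DifferentiableOn ℝ a Ω) {a₀ B : ℝ}
    (ha₀ : 0 < a₀) (ha_ge : ∀ x ∈ Ω, a₀ ≤ a x) (hB : ∀ x ∈ Ω, ‖∇ a x‖ ≤ B)
    (hb : ∀ x ∈ Ω, 0 ≤ b x) (hf : ∀ x ∈ Ω, AntitoneOn (f x) (Ioi 0)) {ε δ : ℝ} (hεδ : ε ≤ δ)
    (hu2 : ContDiffOn ℝ 2 u Ω) (huc : ContinuousOn u (closure Ω))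
    (hu_pos : ∀ x ∈ Ω, 0 < u x + ε)
    (hu : ∀ x ∈ Ω, -divA a u x + b x * u x = f x (u x + ε))
    (hv2 : ContDiffOn ℝ 2 v Ω) (hvc : ContinuousOn v (closure Ω))
    (hv_pos : ∀ x ∈ Ω, 0 < v x + δ)
    (hv : ∀ x ∈ Ω, -divA a v x + b x * v x = f x (v x + δ))
    (hbd : ∀ x ∈ frontier Ω, u x = v x) :
    ∀ x ∈ Ω, v x ≤ u x ∧ u x + ε ≤ v x + δ := by
  intro x hx
  have hvu : v x ≤ u x + 0 :=
    subsolution_le_supersolution_add hd hΩo hΩb ha ha₀ ha_ge hB hb hf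
      hv2 hvc (fun y hy => (hv y hy).le) hu2 huc hu_pos (fun y hy => (hu y hy).ge)
      le_rfl (by linarith) (fun y hy => by linarith [hbd y hy]) x hx
  have huv : u x ≤ v x + (δ - ε) :=
    subsolution_le_supersolution_add hd hΩo hΩb ha ha₀ ha_ge hB hb hf
      hu2 huc (fun y hy => (hu y hy).le) hv2 hvc hv_pos (fun y hy => (hv y hy).ge)
      (by linarith) (by linarith) (fun y hy => by linarith [hbd y hy]) x hx
  constructor <;> linarith

end Comparison

lemma exists_norm_gradient_le_of_contDiffOn {E : Type*} [NormedAddCommGroup E]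
    [InnerProductSpace ℝ E] [CompleteSpace E] {a : E → ℝ} {s U : Set E} (hs : IsCompact s)
    (hU : IsOpen U) (hsU : s ⊆ U) (ha : ContDiffOn ℝ 1 a U) : ∃ B, ∀ x ∈ s, ‖∇ a x‖ ≤ B :=
  hs.exists_bound_of_continuousOn <|
    (InnerProductSpace.toDual ℝ E).symm.continuous.comp_continuousOn <|
      (ha.continuousOn_fderiv_of_isOpen hU le_rfl).mono hsU

lemma antitoneOn_const_mul_rpow_neg {k θ : ℝ} (hk : 0 ≤ k) (hθ : 0 ≤ θ) :
    AntitoneOn (fun t : ℝ => k * t ^ (-θ)) (Ioi 0) := fun _ hs _ _ hst =>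
  mul_le_mul_of_nonneg_left (rpow_le_rpow_of_nonpos hs hst (neg_nonpos.2 hθ)) hk

theorem stmt8 {d : ℕ} (hd : 1 ≤ d) (Ω U : Set (EuclideanSpace ℝ (Fin d)))
    (hΩo : IsOpen Ω) (hΩb : Bornology.IsBounded Ω)
    (hU : IsOpen U) (hUΩ : closure Ω ⊆ U)
    (a b c : EuclideanSpace ℝ (Fin d) → ℝ)
    (ha : ContDiffOn ℝ 1 a U) (a₀ : ℝ) (ha₀ : 0 < a₀) (halb : ∀ x ∈ Ω, a₀ ≤ a x)
    (hbcont : ContinuousOn b (closure Ω)) (hccont : ContinuousOn c (closure Ω))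
    (θ : ℝ) (hθ : 0 ≤ θ)
    (hbnn : ∀ x ∈ Ω, 0 ≤ b x) (hcnp : ∀ x ∈ Ω, c x ≤ 0)
    (g : EuclideanSpace ℝ (Fin d) → ℝ)
    (Ψ : ℕ → EuclideanSpace ℝ (Fin d) → ℝ)
    (hΨ2 : ∀ n : ℕ, 1 ≤ n → ContDiffOn ℝ 2 (Ψ n) Ω)
    (hΨ1 : ∀ n : ℕ, 1 ≤ n → ContDiffOn ℝ 1 (Ψ n) (closure Ω))
    (hΨpos : ∀ n : ℕ, 1 ≤ n → ∀ x ∈ closure Ω, 0 < Ψ n x)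
    (hΨeq : ∀ n : ℕ, 1 ≤ n → ∀ x ∈ Ω,
      -divA a (Ψ n) x + b x * Ψ n x = -c x * (Ψ n x + 1 / (n : ℝ)) ^ (-θ))
    (hΨbd : ∀ n : ℕ, 1 ≤ n → ∀ x ∈ frontier Ω, Ψ n x = g x) :
    ∀ n m : ℕ, 1 ≤ m → m < n → ∀ x ∈ Ω,
      Ψ m x ≤ Ψ n x ∧ Ψ n x + 1 / (n : ℝ) ≤ Ψ m x + 1 / (m : ℝ) := by
  intro n m hm hmn
  have hn : 1 ≤ n := hm.trans hmn.le
  obtain ⟨B, hB⟩ := exists_norm_gradient_le_of_contDiffOn hΩb.isCompact_closure hU hUΩ ha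
  have hshift_pos (k : ℕ) (hk : 1 ≤ k) : ∀ x ∈ Ω, 0 < Ψ k x + 1 / (k : ℝ) := fun x hx =>
    add_pos_of_pos_of_nonneg (hΨpos k hk x (subset_closure hx)) (by positivity)
  exact stmt8_general hd hΩo hΩb
    ((ha.differentiableOn one_ne_zero).mono (subset_closure.trans hUΩ)) ha₀ halb
    (fun x hx => hB x (subset_closure hx)) hbnn
    (fun x hx => antitoneOn_const_mul_rpow_neg (neg_nonneg.2 (hcnp x hx)) hθ)
    (one_div_le_one_div_of_le (by exact_mod_cast hm) (by exact_mod_cast hmn.le))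
    (hΨ2 n hn) (hΨ1 n hn).continuousOn (hshift_pos n hn) (hΨeq n hn)
    (hΨ2 m hm) (hΨ1 m hm).continuousOn (hshift_pos m hm) (hΨeq m hm)
    fun x hx => (hΨbd n hn x hx).trans (hΨbd m hm x hx).symm
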